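/- (Trudinger-type exponential integrability for compactly supported functions) Let $\Omega\subseteq\mathbb{R}^n$, $n\ge2$, be a bounded domain and $\delta_1,\delta_2\in(0,n]$. Then there exist positive constants $a,b$ such that $\int_\Omega \exp\big(a\,|u(x)|^{n/(n-1)}\big)\,d\mathcal{H}^{\delta_1}_\infty \le b$ for all $u\in C^1_0(\Omega)$ with $\int_\Omega |\nabla u(y)|^{\delta_2}\,d\mathcal{H}^{\delta_2}_\infty \le 1$. -/

import Mathlib

open MeasureTheory Metric Set ENNReal

/-- δ-dimensional Hausdorff content via countable ball coverings. -/
noncomputable def hc (n : ℕ) (δ : ℝ) (E : Set (EuclideanSpace ℝ (Fin n))) : ℝ≥0∞ :=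
  ⨅ (c : ℕ → EuclideanSpace ℝ (Fin n)) (r : ℕ → ℝ) (_ : ∀ i, 0 < r i)
    (_ : E ⊆ ⋃ i, ball (c i) (r i)), ∑' i, ENNReal.ofReal (r i ^ δ)

/-- Choquet integral of a nonnegative function over Ω with respect to `hc n δ`. -/
noncomputable def choquet (n : ℕ) (δ : ℝ) (Ω : Set (EuclideanSpace ℝ (Fin n)))
    (f : EuclideanSpace ℝ (Fin n) → ℝ≥0∞) : ℝ≥0∞ :=
  ∫⁻ t in Ioi (0:ℝ), hc n δ {x | x ∈ Ω ∧ ENNReal.ofReal t < f x}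

/-- Euclidean space of dimension `n`. -/
abbrev Euc (n : ℕ) := EuclideanSpace ℝ (Fin n)

open Measure in
/-- Integration in polar coordinates against the kernel `‖y‖ ^ (1 - n)`, which cancels the
Jacobian. -/
theorem lintegral_mul_enorm_rpow_polar {n : ℕ} (hn : 2 ≤ n)
    {g : Euc n → ℝ≥0∞} (hg : Measurable g) :
    ∫⁻ y, g y * ‖y‖ₑ ^ (1 - n : ℝ) =
      ∫⁻ ω, ∫⁻ s in Ioi (0 : ℝ), g (s • (ω : Euc n)) ∂volume
        ∂(volume : Measure (Euc n)).toSphere := by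
  have hdim : Module.finrank ℝ (Euc n) = n := by simp
  have : Nonempty (Fin n) := ⟨⟨0, by omega⟩⟩
  have hF : Measurable fun y : Euc n => g y * ‖y‖ₑ ^ (1 - n : ℝ) :=
    hg.mul (measurable_enorm.pow_const _)
  have hmp := (volume : Measure (Euc n)).measurePreserving_homeomorphUnitSphereProd
  have hsymm := hmp.symm (homeomorphUnitSphereProd (Euc n)).toMeasurableEquiv
  calc ∫⁻ y, g y * ‖y‖ₑ ^ (1 - n : ℝ)
      = ∫⁻ y in ({0}ᶜ : Set (Euc n)), g y * ‖y‖ₑ ^ (1 - n : ℝ) := by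
        rw [restrict_compl_singleton]
    _ = ∫⁻ y : ({0}ᶜ : Set (Euc n)), g y * ‖(y : Euc n)‖ₑ ^ (1 - n : ℝ)
          ∂((volume : Measure (Euc n)).comap (↑)) := by
        rw [← lintegral_subtype_comap (measurableSet_singleton _).compl]
    _ = ∫⁻ p, g ((p.2 : ℝ) • (p.1 : Euc n)) * ‖(p.2 : ℝ) • (p.1 : Euc n)‖ₑ ^ (1 - n : ℝ)
          ∂((volume : Measure (Euc n)).toSphere.prod
            (volumeIoiPow (Module.finrank ℝ (Euc n) - 1))) := by
        exact (hsymm.lintegral_comp (hF.comp measurable_subtype_coe)).symm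
    _ = ∫⁻ ω, ∫⁻ s : Ioi (0 : ℝ), g ((s : ℝ) • (ω : Euc n)) *
          ‖(s : ℝ) • (ω : Euc n)‖ₑ ^ (1 - n : ℝ) ∂(volumeIoiPow (Module.finrank ℝ (Euc n) - 1))
          ∂(volume : Measure (Euc n)).toSphere := by
        rw [lintegral_prod]
        apply Measurable.aemeasurable
        exact hF.comp (by fun_prop : Measurable fun p : sphere (0 : Euc n) 1 × Ioi (0 : ℝ) =>
          (p.2 : ℝ) • (p.1 : Euc n))
    _ = _ := by
        refine lintegral_congr fun ω => ?_
        have hm : Measurable fun s : Ioi (0 : ℝ) => g ((s : ℝ) • (ω : Euc n)) *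
          ‖(s : ℝ) • (ω : Euc n)‖ₑ ^ (1 - n : ℝ) :=
          hF.comp (by fun_prop : Measurable fun s : Ioi (0 : ℝ) => (s : ℝ) • (ω : Euc n))
        rw [volumeIoiPow, lintegral_withDensity_eq_lintegral_mul _ (by fun_prop) hm,
          ← lintegral_subtype_comap measurableSet_Ioi]
        refine lintegral_congr fun s => ?_
        have hs : (0 : ℝ) < s := s.2
        have hω : ‖(ω : Euc n)‖ = 1 := by simp
        have hnorm : ‖(s : ℝ) • (ω : Euc n)‖ₑ = ENNReal.ofReal s := by
          rw [← ofReal_norm, norm_smul, hω, mul_one, Real.norm_of_nonneg hs.le]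
        have hne : ENNReal.ofReal (s : ℝ) ≠ 0 := by simpa using hs
        have hp : ENNReal.ofReal ((s : ℝ) ^ (Module.finrank ℝ (Euc n) - 1)) =
            ENNReal.ofReal s ^ (n - 1 : ℝ) := by
          rw [hdim, ENNReal.ofReal_pow hs.le, ← ENNReal.rpow_natCast, Nat.cast_sub (by omega),
            Nat.cast_one]
        simp only [Pi.mul_apply]
        rw [hnorm, hp, mul_left_comm, ← ENNReal.rpow_add _ _ hne ENNReal.ofReal_ne_top]
        simp

/-- The total mass of the surface measure of the unit sphere is nonzero. -/
theorem toSphere_univ_ne_zero {n : ℕ} (hn : 2 ≤ n) :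
    (volume : Measure (Euc n)).toSphere univ ≠ 0 := by
  have : Nonempty (Fin n) := ⟨⟨0, by omega⟩⟩
  exact (Measure.measure_univ_ne_zero).2 (Measure.toSphere_ne_zero _)

/-- A compactly supported `C¹` function is bounded by the Riesz potential of its gradient. -/
theorem enorm_mul_le_riesz {n : ℕ} (hn : 2 ≤ n) {u : Euc n → ℝ}
    (hu : ContDiff ℝ 1 u) (hc : HasCompactSupport u) (x : Euc n) :
    ‖u x‖ₑ * (volume : Measure (Euc n)).toSphere univ ≤
      ∫⁻ y, ‖fderiv ℝ u (x + y)‖ₑ * ‖y‖ₑ ^ (1 - n : ℝ) := by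
  have hcont : Continuous (fderiv ℝ u) := hu.continuous_fderiv one_ne_zero
  rw [lintegral_mul_enorm_rpow_polar hn (by fun_prop : Measurable fun y => ‖fderiv ℝ u (x + y)‖ₑ),
    ← lintegral_const]
  refine lintegral_mono fun ω => ?_
  have hω : ‖(ω : Euc n)‖ = 1 := by simp
  have hline : Topology.IsClosedEmbedding fun s : ℝ => x + -s • (ω : Euc n) := by
    refine Isometry.isClosedEmbedding (Isometry.of_dist_eq fun a b => ?_)
    rw [dist_add_left, dist_eq_norm, ← sub_smul, norm_smul, hω, mul_one, Real.dist_eq,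
      Real.norm_eq_abs, abs_sub_comm]
    congr 1; ring
  have hsmooth : ContDiff ℝ 1 fun s : ℝ => u (x + -s • (ω : Euc n)) := hu.comp (by fun_prop)
  have hmain := HasCompactSupport.enorm_le_lintegral_Ici_deriv hsmooth
    (hc.comp_isClosedEmbedding hline) 0
  have hderiv (s : ℝ) : ‖deriv (fun s : ℝ => u (x + -s • (ω : Euc n))) s‖ₑ ≤
      ‖fderiv ℝ u (x + -s • (ω : Euc n))‖ₑ := by
    have h1 : HasDerivAt (fun s : ℝ => x + -s • (ω : Euc n)) (-(ω : Euc n)) s := by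
      simpa using ((hasDerivAt_id s).neg.smul_const (ω : Euc n)).const_add x
    have h2 := ((hu.differentiable one_ne_zero).differentiableAt.hasFDerivAt
      (x := x + -s • (ω : Euc n))).comp_hasDerivAt s h1
    rw [show (fun s : ℝ => u (x + -s • (ω : Euc n))) =
        u ∘ fun s : ℝ => x + -s • (ω : Euc n) from rfl,
      h2.deriv]
    refine (ContinuousLinearMap.le_opENorm _ _).trans ?_
    rw [enorm_neg, ← ofReal_norm (ω : Euc n), hω]
    simp
  calc ‖u x‖ₑ ≤ ∫⁻ s in Iic (0 : ℝ), ‖fderiv ℝ u (x + -s • (ω : Euc n))‖ₑ := by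
        simpa using hmain.trans (lintegral_mono hderiv)
    _ = ∫⁻ s in Ici (0 : ℝ), ‖fderiv ℝ u (x + s • (ω : Euc n))‖ₑ := by
        have := (Measure.measurePreserving_neg (volume : Measure ℝ)).setLIntegral_comp_preimage_emb
          (MeasurableEquiv.neg ℝ).measurableEmbedding
          (fun s => ‖fderiv ℝ u (x + s • (ω : Euc n))‖ₑ) (Ici 0)
        simpa using this
    _ = _ := by rw [restrict_Ioi_eq_restrict_Ici]

/-- The mass of `‖y‖ ^ (-n)` on an annulus is logarithmic in the ratio of the radii. -/
theorem lintegral_annulus_enorm_rpow_neg {n : ℕ} (hn : 2 ≤ n) {s t : ℝ} (hs : 0 < s)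
    (hst : s ≤ t) :
    ∫⁻ y in {y : Euc n | s ≤ ‖y‖ ∧ ‖y‖ ≤ t}, ‖y‖ₑ ^ (-n : ℝ) =
      ENNReal.ofReal (Real.log (t / s)) *
        (volume : Measure (Euc n)).toSphere univ := by
  have hA : MeasurableSet {y : Euc n | s ≤ ‖y‖ ∧ ‖y‖ ≤ t} :=
    (measurableSet_le measurable_const measurable_norm).inter
      (measurableSet_le measurable_norm measurable_const)
  rw [← lintegral_indicator hA, ← lintegral_const]
  calc _ = ∫⁻ y, ({y : Euc n | s ≤ ‖y‖ ∧ ‖y‖ ≤ t}.indicator (fun y => ‖y‖ₑ ^ (-1 : ℝ)) y) *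
          ‖y‖ₑ ^ (1 - n : ℝ) := by
        refine lintegral_congr fun y => ?_
        by_cases hy : y ∈ {y : Euc n | s ≤ ‖y‖ ∧ ‖y‖ ≤ t}
        · have : ‖y‖ₑ ≠ 0 := by
            simpa using norm_pos_iff.1 (hs.trans_le hy.1)
          rw [indicator_of_mem hy, indicator_of_mem hy,
            ← ENNReal.rpow_add _ _ this enorm_ne_top]
          congr 1; ring
        · simp [indicator_of_notMem hy]
    _ = _ := by
        rw [lintegral_mul_enorm_rpow_polar hn
          ((measurable_enorm.pow_const _).indicator hA)]
        refine lintegral_congr fun ω => ?_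
        have hω : ‖(ω : Euc n)‖ = 1 := by simp
        have heq : ∀ r ∈ Ioi (0 : ℝ),
            {y : Euc n | s ≤ ‖y‖ ∧ ‖y‖ ≤ t}.indicator (fun y => ‖y‖ₑ ^ (-1 : ℝ)) (r • (ω : Euc n)) =
              (Icc s t).indicator (fun r => ENNReal.ofReal r⁻¹) r := by
          intro r hr
          have hnr : ‖r • (ω : Euc n)‖ = r := by
            rw [norm_smul, hω, mul_one, Real.norm_of_nonneg (le_of_lt hr)]
          have henr : ‖r • (ω : Euc n)‖ₑ = ENNReal.ofReal r := by rw [← ofReal_norm, hnr]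
          simp only [indicator, mem_ofPred_eq, hnr, henr, mem_Icc, ENNReal.rpow_neg_one,
            ENNReal.ofReal_inv_of_pos hr]
        have hsub : Icc s t ⊆ Ioi 0 := fun r hr => hs.trans_le hr.1
        rw [setLIntegral_congr_fun measurableSet_Ioi heq, setLIntegral_indicator measurableSet_Icc,
          inter_eq_left.2 hsub, ← restrict_Ioc_eq_restrict_Icc]
        rw [← integral_inv_of_pos hs (hs.trans_le hst), intervalIntegral.integral_of_le hst,
          ofReal_integral_eq_lintegral_ofReal]
        · refine (intervalIntegral.intervalIntegrable_inv (fun r hr => ?_) continuousOn_id).1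
          rw [uIcc_of_le hst] at hr
          exact (hs.trans_le hr.1).ne'
        · filter_upwards [ae_restrict_mem measurableSet_Ioc] with r hr
          exact inv_nonneg.2 (hs.trans hr.1).le

/-- Hölder estimate of the Riesz potential restricted to an annulus. -/
theorem lintegral_annulus_riesz_le {n : ℕ} (hn : 2 ≤ n)
    {f : Euc n → ℝ≥0∞} (hf : Measurable f) (x : Euc n)
    {s t : ℝ} (hs : 0 < s) (hst : s ≤ t) :
    ∫⁻ y in {y : Euc n | s ≤ ‖y‖ ∧ ‖y‖ ≤ t},
        f (x + y) * ‖y‖ₑ ^ (1 - n : ℝ) ≤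
      (∫⁻ z in closedBall x t, f z ^ (n : ℝ)) ^ (1 / n : ℝ) *
        (ENNReal.ofReal (Real.log (t / s)) *
        (volume : Measure (Euc n)).toSphere univ) ^ ((n - 1) / n : ℝ) := by
  have hn' : (2 : ℝ) ≤ n := by exact_mod_cast hn
  have hpq : (n : ℝ).HolderConjugate (n / (n - 1)) :=
    Real.HolderConjugate.conjExponent (by linarith)
  refine (ENNReal.lintegral_mul_le_Lp_mul_Lq _ hpq
    (hf.comp (measurable_const_add x)).aemeasurable
    (measurable_enorm.pow_const _).aemeasurable).trans ?_
  simp_rw [← ENNReal.rpow_mul]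
  have hexp : (1 - n : ℝ) * (n / (n - 1)) = -n := by
    have : (n : ℝ) - 1 ≠ 0 := by linarith
    field_simp; ring
  rw [hexp, lintegral_annulus_enorm_rpow_neg hn hs hst, one_div_div]
  refine mul_le_mul_left (ENNReal.rpow_le_rpow ?_ (by positivity)) _
  have hmp := measurePreserving_add_left (volume : Measure (Euc n)) x
  have hemb := (MeasurableEquiv.addLeft x).measurableEmbedding
  have := hmp.setLIntegral_comp_preimage_emb hemb (fun z => f z ^ (n : ℝ)) (closedBall x t)
  rw [← this]
  refine lintegral_mono_set fun y hy => ?_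
  simpa [dist_eq_norm] using hy.2

/-- The Hausdorff content is bounded by the sum over any countable covering by balls. -/
theorem hc_le_tsum {n : ℕ} {δ : ℝ} (hδ : 0 < δ) {ι : Type*} [Countable ι] {A : Set (Euc n)}
    (c : ι → Euc n) (r : ι → ℝ) (hr : ∀ i, 0 < r i) (hA : A ⊆ ⋃ i, ball (c i) (r i)) :
    hc n δ A ≤ ∑' i, ENNReal.ofReal (r i ^ δ) := by
  refine ENNReal.le_of_forall_pos_le_add fun ε hε _ => ?_
  obtain ⟨ρ, hρ, hsum⟩ := ENNReal.exists_pos_sum_of_countable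
    (ENNReal.coe_ne_zero.2 hε.ne') ℕ
  obtain ⟨e⟩ : Nonempty (ℕ ≃ ι ⊕ ℕ) := nonempty_equiv_of_countable
  let c' : ι ⊕ ℕ → Euc n := Sum.elim c fun _ => 0
  let r' : ι ⊕ ℕ → ℝ := Sum.elim r fun i => (ρ i : ℝ) ^ (1 / δ)
  have hr' : ∀ j, 0 < r' j := by
    rintro (i | i)
    · exact hr i
    · exact Real.rpow_pos_of_pos (hρ i) _
  have hcov : A ⊆ ⋃ i, ball (c' (e i)) (r' (e i)) := by
    intro x hx
    obtain ⟨i, hi⟩ := mem_iUnion.1 (hA hx)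
    exact mem_iUnion.2 ⟨e.symm (Sum.inl i), by simpa [c', r'] using hi⟩
  calc hc n δ A ≤ ∑' i, ENNReal.ofReal (r' (e i) ^ δ) :=
        iInf_le_of_le (c' ∘ e) <| iInf_le_of_le (r' ∘ e) <|
          iInf_le_of_le (fun i => hr' (e i)) <| iInf_le_of_le hcov le_rfl
    _ = ∑' j, ENNReal.ofReal (r' j ^ δ) := e.tsum_eq fun j => ENNReal.ofReal (r' j ^ δ)
    _ = ∑' i, ENNReal.ofReal (r i ^ δ) + ∑' i, (ρ i : ℝ≥0∞) := by
        rw [ENNReal.summable.tsum_sum (f := fun j => ENNReal.ofReal (r' j ^ δ)) ENNReal.summable]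
        congr 1
        refine tsum_congr fun i => ?_
        simp only [r', Sum.elim_inr]
        rw [← Real.rpow_mul (ρ i).coe_nonneg, one_div_mul_cancel hδ.ne', Real.rpow_one,
          ENNReal.ofReal_coe_nnreal]
    _ ≤ _ := by gcongr

theorem hc_mono {n : ℕ} {δ : ℝ} {A B : Set (Euc n)} (h : A ⊆ B) : hc n δ A ≤ hc n δ B :=
  iInf_mono fun _ => iInf_mono fun _ => iInf_mono fun _ =>
    le_iInf fun hB => iInf_le_of_le (h.trans hB) le_rfl

/-- Sets of bounded extent have controlled content. -/
theorem hc_le_of_subset_ball {n : ℕ} {δ : ℝ} (hδ : 0 < δ) {A : Set (Euc n)} {x : Euc n} {R : ℝ}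
    (hR : 0 < R) (h : A ⊆ ball x R) : hc n δ A ≤ ENNReal.ofReal (R ^ δ) := by
  have := hc_le_tsum hδ (fun _ : Unit => x) (fun _ => R) (fun _ => hR)
    (h.trans_eq (iUnion_const _).symm)
  simpa using this

/-- Superadditivity of `x ↦ x ^ p` for `1 ≤ p`. -/
theorem tsum_rpow_le_rpow_tsum {ι : Type*} (a : ι → ℝ≥0∞) {p : ℝ} (hp : 1 ≤ p) :
    ∑' i, a i ^ p ≤ (∑' i, a i) ^ p := by
  have hsplit (b : ℝ≥0∞) : b ^ p = b * b ^ (p - 1) := by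
    conv_rhs => rw [← ENNReal.rpow_one b, ← ENNReal.rpow_mul, one_mul,
      ← ENNReal.rpow_add_of_nonneg _ _ zero_le_one (by linarith)]
    congr 1; ring
  rw [hsplit (∑' i, a i), ← ENNReal.tsum_mul_right]
  refine ENNReal.tsum_le_tsum fun i => ?_
  rw [hsplit]
  exact mul_le_mul_right (ENNReal.rpow_le_rpow (ENNReal.le_tsum i) (by linarith)) _

/-- Lebesgue measure is dominated by a power of the Hausdorff content. -/
theorem volume_le_mul_hc_rpow {n : ℕ} {δ : ℝ} (hδ : 0 < δ) (hδn : δ ≤ n) (A : Set (Euc n)) :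
    volume A ≤ volume (ball (0 : Euc n) 1) * hc n δ A ^ (n / δ : ℝ) := by
  have hp : 1 ≤ n / δ := (one_le_div hδ).2 hδn
  have hp0 : 0 < n / δ := by linarith
  have hC0 : volume (ball (0 : Euc n) 1) ≠ 0 := (measure_ball_pos _ _ one_pos).ne'
  have hCt : volume (ball (0 : Euc n) 1) ≠ ∞ := measure_ball_lt_top.ne
  rw [mul_comm, ← ENNReal.div_le_iff hC0 hCt, ← ENNReal.rpow_inv_le_iff hp0]
  refine le_iInf fun c => le_iInf fun r => le_iInf fun hr => le_iInf fun hA => ?_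
  rw [ENNReal.rpow_inv_le_iff hp0, ENNReal.div_le_iff hC0 hCt]
  calc volume A ≤ ∑' i, volume (ball (c i) (r i)) :=
        (measure_mono hA).trans (measure_iUnion_le _)
    _ = (∑' i, ENNReal.ofReal (r i ^ δ) ^ (n / δ)) * volume (ball (0 : Euc n) 1) := by
        rw [← ENNReal.tsum_mul_right]
        refine tsum_congr fun i => ?_
        rw [Measure.addHaar_ball_of_pos _ _ (hr i), finrank_euclideanSpace_fin,
          ENNReal.ofReal_rpow_of_pos (Real.rpow_pos_of_pos (hr i) _), ← Real.rpow_mul (hr i).le,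
          mul_div_cancel₀ _ hδ.ne', Real.rpow_natCast]
    _ ≤ _ := mul_le_mul_left (tsum_rpow_le_rpow_tsum _ hp) _

/-- A Choquet bound on the `δ`-th power of a function supported in `Ω` controls its `L^n` norm. -/
theorem lintegral_rpow_le_of_choquet_le {n : ℕ} {δ : ℝ} (hδ : 0 < δ) (hδn : δ ≤ n)
    {Ω : Set (Euc n)} {g : Euc n → ℝ} (hg : Measurable g) (hg0 : ∀ y, 0 ≤ g y)
    (hsupp : ∀ y ∉ Ω, g y = 0)
    (h : choquet n δ Ω (fun y => ENNReal.ofReal (g y ^ δ)) ≤ 1) :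
    ∫⁻ y, ENNReal.ofReal (g y ^ (n : ℝ)) ≤
      ENNReal.ofReal (n / δ) * volume (ball (0 : Euc n) 1) := by
  set p : ℝ := n / δ with hpdef
  have hp : 1 ≤ p := (one_le_div hδ).2 hδn
  set G : ℝ → ℝ≥0∞ := fun t => hc n δ {x | x ∈ Ω ∧ ENNReal.ofReal t < ENNReal.ofReal (g x ^ δ)}
  have hG : Antitone G := fun s t hst => hc_mono fun x hx =>
    ⟨hx.1, (ENNReal.ofReal_le_ofReal hst).trans_lt hx.2⟩
  have hGint : ∫⁻ t in Ioi (0 : ℝ), G t ≤ 1 := h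
  have hweak (t : ℝ) (ht : 0 < t) : G t * ENNReal.ofReal t ≤ 1 := by
    calc G t * ENNReal.ofReal t = ∫⁻ _ in Ioc (0 : ℝ) t, G t := by simp
      _ ≤ ∫⁻ s in Ioc (0 : ℝ) t, G s := setLIntegral_mono' measurableSet_Ioc fun s hs => hG hs.2
      _ ≤ ∫⁻ s in Ioi (0 : ℝ), G s := lintegral_mono_set Ioc_subset_Ioi_self
      _ ≤ 1 := hGint
  have hlevel (t : ℝ) (ht : 0 < t) :
      volume {y | t < g y ^ δ} * ENNReal.ofReal (t ^ (p - 1)) ≤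
        volume (ball (0 : Euc n) 1) * G t := by
    have hsub : {y | t < g y ^ δ} ⊆
        {x | x ∈ Ω ∧ ENNReal.ofReal t < ENNReal.ofReal (g x ^ δ)} := by
      intro y hy
      have hy' : t < g y ^ δ := hy
      refine ⟨?_, (ENNReal.ofReal_lt_ofReal_iff (ht.trans hy')).2 hy'⟩
      by_contra hyΩ
      rw [hsupp y hyΩ, Real.zero_rpow hδ.ne'] at hy'
      exact ht.not_gt hy'
    have hpow : G t ^ p = G t * G t ^ (p - 1) := by
      conv_rhs => rw [← ENNReal.rpow_one (G t), ← ENNReal.rpow_mul, one_mul,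
        ← ENNReal.rpow_add_of_nonneg _ _ zero_le_one (by linarith)]
      congr 1; ring
    calc volume {y | t < g y ^ δ} * ENNReal.ofReal (t ^ (p - 1))
        ≤ (volume (ball (0 : Euc n) 1) * G t ^ p) * ENNReal.ofReal (t ^ (p - 1)) :=
          mul_le_mul_left ((measure_mono hsub).trans (volume_le_mul_hc_rpow hδ hδn _)) _
      _ = volume (ball (0 : Euc n) 1) * G t * (G t * ENNReal.ofReal t) ^ (p - 1) := by
          rw [ENNReal.mul_rpow_of_nonneg _ _ (by linarith), ENNReal.ofReal_rpow_of_pos ht, hpow]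
          ring
      _ ≤ volume (ball (0 : Euc n) 1) * G t * 1 :=
          mul_le_mul_right (ENNReal.rpow_le_one (hweak t ht) (by linarith)) _
      _ = _ := mul_one _
  have hrw (y : Euc n) : g y ^ (n : ℝ) = (g y ^ δ) ^ p := by
    rw [← Real.rpow_mul (hg0 y), hpdef, mul_div_cancel₀ _ hδ.ne']
  simp_rw [hrw]
  rw [lintegral_rpow_eq_lintegral_meas_lt_mul _
    (Filter.Eventually.of_forall fun y => Real.rpow_nonneg (hg0 y) δ)
    (hg.pow_const δ).aemeasurable (by linarith)]
  refine mul_le_mul_right ?_ _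
  calc _ ≤ ∫⁻ t in Ioi (0 : ℝ), volume (ball (0 : Euc n) 1) * G t :=
        setLIntegral_mono' measurableSet_Ioi fun t ht => hlevel t ht
    _ = volume (ball (0 : Euc n) 1) * ∫⁻ t in Ioi (0 : ℝ), G t :=
        lintegral_const_mul' _ _ measure_ball_lt_top.ne
    _ ≤ volume (ball (0 : Euc n) 1) * 1 := mul_le_mul_right hGint _
    _ = _ := mul_one _

/-- The set of points where a finite measure concentrates on small balls has small content. -/
theorem hc_concentration_le {n : ℕ} {δ : ℝ} (hδ : 0 < δ) (ν : Measure (Euc n)) {C r : ℝ}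
    (hC : 0 < C) (hν : ν univ ≤ ENNReal.ofReal C) (hr : 0 < r) :
    hc n δ {x | ∃ s, 0 < s ∧ s ≤ r ∧ ENNReal.ofReal (C * (s / r) ^ δ) < ν (closedBall x s)} ≤
      ENNReal.ofReal ((6 * r) ^ δ) := by
  set B := {x | ∃ s, 0 < s ∧ s ≤ r ∧ ENNReal.ofReal (C * (s / r) ^ δ) < ν (closedBall x s)}
  have hex (x : Euc n) : ∃ s, x ∈ B →
      0 < s ∧ s ≤ r ∧ ENNReal.ofReal (C * (s / r) ^ δ) < ν (closedBall x s) := by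
    by_cases hx : x ∈ B
    · obtain ⟨s, hs⟩ := hx
      exact ⟨s, fun _ => hs⟩
    · exact ⟨0, fun h => absurd h hx⟩
  choose s hs using hex
  obtain ⟨I, hIB, hdisj, hcov⟩ := Vitali.exists_disjoint_subfamily_covering_enlargement_closedBall
    B id s r (fun x hx => (hs x hx).2.1) 5 (by norm_num)
  have hcount : I.Countable := hdisj.countable_of_nonempty_interior fun x hx =>
    ⟨x, ball_subset_interior_closedBall (mem_ball_self (hs x (hIB hx)).1)⟩
  have := hcount.to_subtype
  have hpos (x : I) : 0 < s x := (hs x (hIB x.2)).1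
  have hcover : B ⊆ ⋃ x : I, ball (x : Euc n) (6 * s x) := by
    intro x hx
    obtain ⟨b, hb, hsub⟩ := hcov x hx
    refine mem_iUnion.2 ⟨⟨b, hb⟩, ?_⟩
    have h1 := hsub (mem_closedBall_self (hs x hx).1.le)
    exact closedBall_subset_ball (by linarith [hpos ⟨b, hb⟩]) h1
  have hterm (x : I) : ENNReal.ofReal ((6 * s x) ^ δ) ≤
      ENNReal.ofReal ((6 * r) ^ δ / C) * ν (closedBall x (s x)) := by
    calc ENNReal.ofReal ((6 * s x) ^ δ)
        = ENNReal.ofReal ((6 * r) ^ δ / C) * ENNReal.ofReal (C * (s x / r) ^ δ) := by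
          rw [← ENNReal.ofReal_mul (by positivity)]
          congr 1
          rw [show 6 * s x = (6 * r) * (s x / r) by field_simp,
            Real.mul_rpow (by positivity) (div_nonneg (hpos x).le hr.le)]
          field_simp
      _ ≤ _ := mul_le_mul_right (hs x (hIB x.2)).2.2.le _
  calc hc n δ B ≤ ∑' x : I, ENNReal.ofReal ((6 * s x) ^ δ) :=
        hc_le_tsum hδ (fun x : I => (x : Euc n)) _ (fun x => by linarith [hpos x]) hcover
    _ ≤ ∑' x : I, ENNReal.ofReal ((6 * r) ^ δ / C) * ν (closedBall x (s x)) :=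
        ENNReal.tsum_le_tsum hterm
    _ = ENNReal.ofReal ((6 * r) ^ δ / C) * ν (⋃ x ∈ I, closedBall x (s x)) := by
        rw [ENNReal.tsum_mul_left]
        congr 1
        exact (measure_biUnion hcount hdisj fun x _ => isClosed_closedBall.measurableSet).symm
    _ ≤ ENNReal.ofReal ((6 * r) ^ δ / C) * ENNReal.ofReal C :=
        mul_le_mul_right ((measure_mono (subset_univ _)).trans hν) _
    _ = _ := by
        rw [← ENNReal.ofReal_mul (by positivity), div_mul_cancel₀ _ (ne_of_gt hC)]

/-- The punctured ball of radius `r` is covered by dyadic annuli. -/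
theorem exists_mem_dyadic_annulus {E : Type*} [NormedAddCommGroup E] {y : E} (hy : y ≠ 0) {r : ℝ}
    (hyr : ‖y‖ ≤ r) : ∃ k : ℕ, r * (1 / 2) ^ (k + 1) ≤ ‖y‖ ∧ ‖y‖ ≤ r * (1 / 2) ^ k := by
  have hy0 : 0 < ‖y‖ := norm_pos_iff.2 hy
  have hr : 0 < r := hy0.trans_le hyr
  obtain ⟨k, hk1, hk2⟩ := exists_nat_pow_near_of_lt_one (div_pos hy0 hr) ((div_le_one hr).2 hyr)
    (by norm_num : (0 : ℝ) < 1 / 2) (by norm_num)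
  rw [lt_div_iff₀ hr] at hk1
  rw [div_le_iff₀ hr] at hk2
  exact ⟨k, by linarith, by linarith⟩

/-- At points where `f ^ n` does not concentrate below scale `r`, the Riesz potential of `f` is
controlled by a power of `log (D / r)`. -/
theorem exists_riesz_le_log {n : ℕ} (hn : 2 ≤ n) {δ C : ℝ} (hδ : 0 < δ) (hC : 0 < C) :
    ∃ K : ℝ≥0∞, K ≠ ∞ ∧ ∀ f : Euc n → ℝ≥0∞, Measurable f → ∀ (x : Euc n) (r D : ℝ), 0 < r →
      1 ≤ Real.log (D / r) → r ≤ D → (∀ y, D < ‖y‖ → f (x + y) = 0) →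
      ∫⁻ z, f z ^ (n : ℝ) ≤ ENNReal.ofReal C →
      (∀ s, 0 < s → s ≤ r →
        ∫⁻ z in closedBall x s, f z ^ (n : ℝ) ≤ ENNReal.ofReal (C * (s / r) ^ δ)) →
      ∫⁻ y, f (x + y) * ‖y‖ₑ ^ (1 - n : ℝ) ≤
        K * ENNReal.ofReal (Real.log (D / r)) ^ ((n - 1) / n : ℝ) := by
  have hn' : (2 : ℝ) ≤ n := by exact_mod_cast hn
  have hn0 : (0 : ℝ) < n := by linarith
  have : Nonempty (Fin n) := ⟨⟨0, by omega⟩⟩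
  have hβ : (0 : ℝ) ≤ (n - 1) / n := div_nonneg (by linarith) hn0.le
  set S := (volume : Measure (Euc n)).toSphere univ
  have hS : S ≠ ∞ := measure_ne_top _ _
  set q : ℝ := (1 / 2) ^ (δ / n)
  have hq0 : 0 < q := by positivity
  have hq1 : q < 1 := Real.rpow_lt_one (by norm_num) (by norm_num) (by positivity)
  set c : ℝ≥0∞ := ENNReal.ofReal C ^ (1 / n : ℝ) * S ^ ((n - 1) / n : ℝ)
  refine ⟨c + c * ∑' k : ℕ, ENNReal.ofReal q ^ k, ?_, ?_⟩
  · have hc : c ≠ ∞ := ENNReal.mul_ne_top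
      (ENNReal.rpow_ne_top_of_nonneg (by positivity) ENNReal.ofReal_ne_top)
      (ENNReal.rpow_ne_top_of_nonneg hβ hS)
    refine ENNReal.add_ne_top.2 ⟨hc, ENNReal.mul_ne_top hc ?_⟩
    rw [ENNReal.tsum_geometric]
    simpa [tsub_eq_zero_iff_le] using hq1
  intro f hf x r D hr hL hrD hsupp htot hgood
  set L := Real.log (D / r)
  set F : Euc n → ℝ≥0∞ := fun y => f (x + y) * ‖y‖ₑ ^ (1 - n : ℝ)
  set far : Set (Euc n) := {y | r ≤ ‖y‖ ∧ ‖y‖ ≤ D}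
  set near : ℕ → Set (Euc n) := fun k => {y | r * (1 / 2) ^ (k + 1) ≤ ‖y‖ ∧ ‖y‖ ≤ r * (1 / 2) ^ k}
  have hann (a b : ℝ) : MeasurableSet {y : Euc n | a ≤ ‖y‖ ∧ ‖y‖ ≤ b} :=
    (measurableSet_le measurable_const measurable_norm).inter
      (measurableSet_le measurable_norm measurable_const)
  have hfar : ∫⁻ y in far, F y ≤ c * ENNReal.ofReal L ^ ((n - 1) / n : ℝ) := by
    refine (lintegral_annulus_riesz_le hn hf x hr hrD).trans ?_
    calc _ ≤ ENNReal.ofReal C ^ (1 / n : ℝ) * (ENNReal.ofReal L * S) ^ ((n - 1) / n : ℝ) :=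
          mul_le_mul_left (ENNReal.rpow_le_rpow ((setLIntegral_le_lintegral _ _).trans htot)
            (by positivity)) _
      _ = _ := by rw [ENNReal.mul_rpow_of_nonneg _ _ hβ]; ring
  have hnear (k : ℕ) : ∫⁻ y in near k, F y ≤
      c * ENNReal.ofReal L ^ ((n - 1) / n : ℝ) * ENNReal.ofReal q ^ k := by
    have hk0 : 0 < r * (1 / 2) ^ k := by positivity
    have hkr : r * (1 / 2) ^ k ≤ r :=
      mul_le_of_le_one_right hr.le (pow_le_one₀ (by norm_num) (by norm_num))
    refine (lintegral_annulus_riesz_le hn hf x (s := r * (1 / 2) ^ (k + 1)) (by positivity)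
      (by rw [pow_succ]; linarith)).trans ?_
    have hlog : Real.log (r * (1 / 2) ^ k / (r * (1 / 2) ^ (k + 1))) ≤ L := by
      rw [show r * (1 / 2 : ℝ) ^ k / (r * (1 / 2) ^ (k + 1)) = 2 by field_simp; ring]
      linarith [Real.log_two_lt_d9]
    have hmass : ENNReal.ofReal (C * (r * (1 / 2) ^ k / r) ^ δ) ^ (1 / n : ℝ) =
        ENNReal.ofReal C ^ (1 / n : ℝ) * ENNReal.ofReal q ^ k := by
      rw [ENNReal.ofReal_mul hC.le, ENNReal.mul_rpow_of_nonneg _ _ (by positivity)]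
      congr 1
      rw [ENNReal.ofReal_rpow_of_nonneg (by positivity) (by positivity),
        ← ENNReal.ofReal_pow hq0.le, mul_div_cancel_left₀ _ hr.ne']
      congr 1
      rw [← Real.rpow_natCast, ← Real.rpow_natCast, ← Real.rpow_mul (by norm_num),
        ← Real.rpow_mul (by norm_num), ← Real.rpow_mul (by norm_num)]
      congr 1; ring
    calc _ ≤ ENNReal.ofReal (C * (r * (1 / 2) ^ k / r) ^ δ) ^ (1 / n : ℝ) *
          (ENNReal.ofReal L * S) ^ ((n - 1) / n : ℝ) :=
          mul_le_mul' (ENNReal.rpow_le_rpow (hgood _ hk0 hkr) (by positivity))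
            (ENNReal.rpow_le_rpow (mul_le_mul_left (ENNReal.ofReal_le_ofReal hlog) _) hβ)
      _ = _ := by rw [hmass, ENNReal.mul_rpow_of_nonneg _ _ hβ]; ring
  have hsplit : ∫⁻ y, F y ≤ ∫⁻ y in far ∪ ⋃ k, near k, F y := by
    rw [← lintegral_indicator ((hann _ _).union (MeasurableSet.iUnion fun k => hann _ _))]
    refine lintegral_mono_ae ?_
    filter_upwards [compl_mem_ae_iff.2 (measure_singleton (0 : Euc n))] with y hy
    by_cases hD : D < ‖y‖
    · simp [F, hsupp y hD]
    · refine (indicator_of_mem (f := F) ?_).ge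
      rcases le_total r ‖y‖ with h | h
      · exact Or.inl ⟨h, not_lt.1 hD⟩
      · exact Or.inr (mem_iUnion.2 (exists_mem_dyadic_annulus hy h))
  calc ∫⁻ y, F y ≤ (∫⁻ y in far, F y) + ∑' k, ∫⁻ y in near k, F y :=
        hsplit.trans <| (lintegral_union_le _ _ _).trans <|
          add_le_add_right (lintegral_iUnion_le _ _) _
    _ ≤ c * ENNReal.ofReal L ^ ((n - 1) / n : ℝ) +
        ∑' k : ℕ, c * ENNReal.ofReal L ^ ((n - 1) / n : ℝ) * ENNReal.ofReal q ^ k :=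
        add_le_add hfar (ENNReal.tsum_le_tsum hnear)
    _ = _ := by rw [ENNReal.tsum_mul_left]; ring

/-- Exponential decay of the content of the level sets of `u`. -/
theorem exists_hc_level_le {n : ℕ} (hn : 2 ≤ n) {Ω : Set (Euc n)} {D : ℝ} (hD : 0 < D)
    (hΩ : ∀ x ∈ Ω, ∀ y ∈ Ω, dist y x ≤ D) {δ₁ δ₂ : ℝ} (h1 : 0 < δ₁) (h2 : 0 < δ₂) (h2n : δ₂ ≤ n) :
    ∃ K : ℝ, 0 < K ∧ ∀ u : Euc n → ℝ, ContDiff ℝ 1 u → HasCompactSupport u → tsupport u ⊆ Ω →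
      choquet n δ₂ Ω (fun y => ENNReal.ofReal (‖fderiv ℝ u y‖ ^ δ₂)) ≤ 1 →
      ∀ L : ℝ, 1 ≤ L → hc n δ₁ {x | x ∈ Ω ∧ K * L ^ ((n - 1) / n : ℝ) < |u x|} ≤
        ENNReal.ofReal ((6 * (D * Real.exp (-L))) ^ δ₁) := by
  have hn' : (2 : ℝ) ≤ n := by exact_mod_cast hn
  have hβ : (0 : ℝ) ≤ (n - 1) / n := div_nonneg (by linarith) (by linarith)
  set V := ENNReal.ofReal (n / δ₂) * volume (ball (0 : Euc n) 1)
  have hV : V ≠ ∞ := ENNReal.mul_ne_top ENNReal.ofReal_ne_top measure_ball_lt_top.ne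
  set C : ℝ := V.toReal + 1
  have hC : 0 < C := by positivity
  have hVC : V ≤ ENNReal.ofReal C := (ENNReal.le_ofReal_iff_toReal_le hV hC.le).2 (by simp [C])
  obtain ⟨K, hK, hKbound⟩ := exists_riesz_le_log hn h1 hC
  set S := (volume : Measure (Euc n)).toSphere univ
  have hS0 : S ≠ 0 := toSphere_univ_ne_zero hn
  have hS : S ≠ ∞ := measure_ne_top _ _
  have hKS : K / S ≠ ∞ := ENNReal.div_ne_top hK hS0
  refine ⟨(K / S).toReal + 1, by positivity, fun u hu hcs hsub hch L hL => ?_⟩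
  have hcont : Continuous (fderiv ℝ u) := hu.continuous_fderiv one_ne_zero
  have hzero (y : Euc n) (hy : y ∉ Ω) : fderiv ℝ u y = 0 := by
    by_contra h
    exact hy (hsub (support_fderiv_subset ℝ h))
  set f : Euc n → ℝ≥0∞ := fun y => ‖fderiv ℝ u y‖ₑ
  have hf : Measurable f := by fun_prop
  have hfn : ∫⁻ z, f z ^ (n : ℝ) ≤ ENNReal.ofReal C := by
    refine le_trans (le_of_eq (lintegral_congr fun z => ?_))
      ((lintegral_rpow_le_of_choquet_le h2 h2n (g := fun y => ‖fderiv ℝ u y‖) (by fun_prop)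
        (fun y => norm_nonneg _) (fun y hy => by simp [hzero y hy]) hch).trans hVC)
    rw [← ENNReal.ofReal_rpow_of_nonneg (norm_nonneg _) (by positivity), ofReal_norm]
  set r := D * Real.exp (-L)
  have hr : 0 < r := by positivity
  have hrD : r ≤ D := mul_le_of_le_one_right hD.le (Real.exp_le_one_iff.2 (by linarith))
  have hlog : Real.log (D / r) = L := by
    rw [show D / r = Real.exp L by simp only [r, Real.exp_neg]; field_simp, Real.log_exp]
  refine (hc_mono fun x hx => ?_).trans (hc_concentration_le h1
    ((volume : Measure (Euc n)).withDensity fun z => f z ^ (n : ℝ)) hC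
    (by rwa [withDensity_apply _ MeasurableSet.univ, Measure.restrict_univ]) hr)
  obtain ⟨hxΩ, hux⟩ := hx
  by_contra hgood
  simp only [mem_ofPred_eq, not_exists, not_and, not_lt] at hgood
  have hriesz := (enorm_mul_le_riesz hn hu hcs x).trans
    (hKbound f hf x r D hr (hlog ▸ hL) hrD (fun y hy => ?_) hfn fun s hs hsr => ?_)
  · rw [hlog, ← ENNReal.le_div_iff_mul_le (Or.inl hS0) (Or.inl hS), ENNReal.mul_div_right_comm,
      ← ofReal_norm, ENNReal.ofReal_rpow_of_nonneg (by linarith) hβ,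
      ← ENNReal.ofReal_toReal hKS, ← ENNReal.ofReal_mul ENNReal.toReal_nonneg,
      ENNReal.ofReal_le_ofReal_iff (by positivity), Real.norm_eq_abs] at hriesz
    have : 0 ≤ L ^ ((n - 1) / n : ℝ) := Real.rpow_nonneg (by linarith) _
    linarith
  · have : x + y ∉ Ω := fun h => by
      have := hΩ x hxΩ _ h
      rw [dist_eq_norm, add_sub_cancel_left] at this
      linarith
    simp only [f, ← ofReal_norm, hzero _ this, norm_zero, ENNReal.ofReal_zero]
  · have := hgood s hs hsr
    rwa [withDensity_apply _ isClosed_closedBall.measurableSet] at this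

theorem stmt_19 (n : ℕ) (hn : 2 ≤ n) (Ω : Set (EuclideanSpace ℝ (Fin n)))
    (hΩo : IsOpen Ω) (hΩc : IsConnected Ω) (hΩb : Bornology.IsBounded Ω)
    (δ₁ δ₂ : ℝ) (h1 : 0 < δ₁) (h1n : δ₁ ≤ n) (h2 : 0 < δ₂) (h2n : δ₂ ≤ n) :
    ∃ a b : ℝ, 0 < a ∧ 0 < b ∧
      ∀ u : EuclideanSpace ℝ (Fin n) → ℝ, ContDiff ℝ 1 u → HasCompactSupport u →
        tsupport u ⊆ Ω →
        choquet n δ₂ Ω (fun y => ENNReal.ofReal (‖fderiv ℝ u y‖ ^ δ₂)) ≤ 1 →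
        choquet n δ₁ Ω (fun x => ENNReal.ofReal (Real.exp (a * |u x| ^ ((n : ℝ) / (n - 1 : ℝ))))) ≤
          ENNReal.ofReal b := by
  have hn' : (2 : ℝ) ≤ n := by exact_mod_cast hn
  obtain ⟨x₀, hx₀⟩ := hΩc.nonempty
  set D : ℝ := diam Ω + 1
  have hD : 0 < D := by positivity
  have hdist : ∀ x ∈ Ω, ∀ y ∈ Ω, dist y x ≤ D := fun x hx y hy =>
    (dist_le_diam_of_mem hΩb hy hx).trans (by simp [D])
  have hball : Ω ⊆ ball x₀ (D + 1) := fun y hy => (hdist x₀ hx₀ y hy).trans_lt (lt_add_one D)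
  obtain ⟨K, hK, hlevel⟩ := exists_hc_level_le hn hD hdist h1 h2 h2n
  set p : ℝ := n / (n - 1)
  have hp : 0 < p := div_pos (by linarith) (by linarith)
  have hpinv : ((n - 1) / n : ℝ) * p = 1 := by
    have : (n : ℝ) - 1 ≠ 0 := by linarith
    simp only [p]; field_simp
  set T₀ : ℝ := Real.exp (δ₁ / 2)
  have hT₀ : 0 < T₀ := Real.exp_pos _
  set B : ℝ≥0∞ := ENNReal.ofReal ((D + 1) ^ δ₁) * ENNReal.ofReal T₀ +
    ∫⁻ t in Ioi T₀, ENNReal.ofReal ((6 * D) ^ δ₁ * t ^ (-2 : ℝ))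
  have hB : B ≠ ∞ := ENNReal.add_ne_top.2
    ⟨ENNReal.mul_ne_top ENNReal.ofReal_ne_top ENNReal.ofReal_ne_top,
      (((integrableOn_Ioi_rpow_of_lt (by norm_num) hT₀).const_mul _).lintegral_lt_top).ne⟩
  refine ⟨δ₁ / (2 * K ^ p), B.toReal + 1, by positivity, by positivity,
    fun u hu hcs hsub hch => ?_⟩
  set G : ℝ → ℝ≥0∞ := fun t => hc n δ₁ {x | x ∈ Ω ∧
    ENNReal.ofReal t < ENNReal.ofReal (Real.exp (δ₁ / (2 * K ^ p) * |u x| ^ p))}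
  have hsmall (t : ℝ) : G t ≤ ENNReal.ofReal ((D + 1) ^ δ₁) :=
    hc_le_of_subset_ball h1 (by linarith) fun x hx => hball hx.1
  have hlarge (t : ℝ) (ht : T₀ < t) : G t ≤ ENNReal.ofReal ((6 * D) ^ δ₁ * t ^ (-2 : ℝ)) := by
    have ht0 : 0 < t := hT₀.trans ht
    have hlogt : δ₁ / 2 < Real.log t := (Real.lt_log_iff_exp_lt ht0).2 ht
    set L : ℝ := 2 * Real.log t / δ₁
    have hL : 1 ≤ L := (one_le_div h1).2 (by linarith)
    have hbound : ENNReal.ofReal ((6 * (D * Real.exp (-L))) ^ δ₁) =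
        ENNReal.ofReal ((6 * D) ^ δ₁ * t ^ (-2 : ℝ)) := by
      rw [← mul_assoc, Real.mul_rpow (by positivity) (Real.exp_pos _).le, ← Real.exp_mul,
        Real.rpow_def_of_pos ht0]
      congr 3
      simp only [L]; field_simp
    rw [← hbound]
    refine le_trans (hc_mono ?_) (hlevel u hu hcs hsub hch L hL)
    intro x hx
    refine ⟨hx.1, ?_⟩
    have hexp := (ENNReal.ofReal_lt_ofReal_iff (Real.exp_pos _)).1 hx.2
    rw [← Real.log_lt_iff_lt_exp ht0, div_mul_eq_mul_div, lt_div_iff₀ (by positivity)] at hexp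
    refine (Real.rpow_lt_rpow_iff (by positivity) (abs_nonneg _) hp).1 ?_
    rw [Real.mul_rpow hK.le (by positivity), ← Real.rpow_mul (by linarith), hpinv, Real.rpow_one]
    simp only [L]
    rw [mul_div_assoc', div_lt_iff₀ h1]
    linarith
  calc choquet n δ₁ Ω _ = ∫⁻ t in Ioc 0 T₀ ∪ Ioi T₀, G t := by
        rw [Ioc_union_Ioi_eq_Ioi hT₀.le]; rfl
    _ ≤ (∫⁻ t in Ioc 0 T₀, G t) + ∫⁻ t in Ioi T₀, G t := lintegral_union_le _ _ _
    _ ≤ B := by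
        refine add_le_add ?_ (setLIntegral_mono' measurableSet_Ioi hlarge)
        exact (lintegral_mono hsmall).trans_eq (by simp)
    _ ≤ ENNReal.ofReal (B.toReal + 1) :=
        (ENNReal.le_ofReal_iff_toReal_le hB (by positivity)).2 (by linarith)
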